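/- Let (A,m) be a free multiarrangement with a locally heavy hyperplane H_0. Then the Euler restriction (A^{H_0}, m^*) (which equals the Euler–Ziegler restriction (A^{H_0}, m^{H_0}) since H_0 is locally heavy) is a free multiarrangement, and if exp(A,m) = (m(H_0), d_2, ..., d_ℓ) then exp(A^{H_0}, m^{H_0}) = (d_2, ..., d_ℓ). -/

import Mathlib

open scoped Classical
open MvPolynomial

namespace ArrPaper

variable {K : Type*} [Field K] {ℓ : ℕ}

/-- The coordinate ring `S = K[x₁,…,x_ℓ]`. -/
noncomputable abbrev S (K : Type*) [Field K] (ℓ : ℕ) := MvPolynomial (Fin ℓ) K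

/-- The linear form associated to a covector `c`. -/
noncomputable def linForm (c : Fin ℓ → K) : S K ℓ :=
  ∑ i, MvPolynomial.C (c i) * MvPolynomial.X i

/-- The linear functional associated to a covector. -/
noncomputable def toFunc (c : Fin ℓ → K) : (Fin ℓ → K) →ₗ[K] K :=
  ∑ i, c i • LinearMap.proj i

/-- A (central) hyperplane arrangement, given by a finite set of nonzero,
pairwise non-proportional covectors (defining linear forms). -/
structure Arrangement (K : Type*) [Field K] (ℓ : ℕ) where
  hyps : Finset (Fin ℓ → K)
  ne_zero : ∀ c ∈ hyps, c ≠ 0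
  nonparallel : ∀ c ∈ hyps, ∀ c' ∈ hyps, c ≠ c' → ∀ t : K, c' ≠ t • c

/-- Derivations of the polynomial ring `S`. -/
abbrev Der (K : Type*) [Field K] (ℓ : ℕ) := Derivation K (S K ℓ) (S K ℓ)

/-- `θ` is a logarithmic derivation of the multiarrangement `(A, m)`, i.e.
`θ(α_H) ∈ α_H^{m(H)}·S` for all `H ∈ A`. -/
def IsLogDer (A : Arrangement K ℓ) (m : (Fin ℓ → K) → ℕ) (θ : Der K ℓ) : Prop :=
  ∀ c ∈ A.hyps, (linForm c) ^ (m c) ∣ θ (linForm c)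

/-- `θ` is homogeneous of polynomial degree `d`: `θ(α)` is homogeneous of degree `d`
for every linear form `α`. -/
def IsHomogOfDeg (θ : Der K ℓ) (d : ℕ) : Prop :=
  ∀ c : Fin ℓ → K, (θ (linForm c)).IsHomogeneous d

/-- `θ₁, …, θ_ℓ` form a basis of the `S`-module `D(A,m)`. -/
def IsDerBasis (A : Arrangement K ℓ) (m : (Fin ℓ → K) → ℕ) (θ : Fin ℓ → Der K ℓ) : Prop :=
  (∀ i, IsLogDer A m (θ i)) ∧
  ∀ η : Der K ℓ, IsLogDer A m η → ∃! f : Fin ℓ → S K ℓ, η = ∑ i, f i • θ i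

/-- `(A,m)` is free with a homogeneous basis of degrees (exponents) `d`. -/
def IsFreeWithExp (A : Arrangement K ℓ) (m : (Fin ℓ → K) → ℕ) (d : Fin ℓ → ℕ) : Prop :=
  ∃ θ : Fin ℓ → Der K ℓ, (∀ i, IsHomogOfDeg (θ i) (d i)) ∧ IsDerBasis A m θ

/-- `(A,m)` is a free multiarrangement. -/
def IsFree (A : Arrangement K ℓ) (m : (Fin ℓ → K) → ℕ) : Prop :=
  ∃ d : Fin ℓ → ℕ, IsFreeWithExp A m d

/-- `|m|`, the total multiplicity. -/
def msum (A : Arrangement K ℓ) (m : (Fin ℓ → K) → ℕ) : ℕ := ∑ c ∈ A.hyps, m c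

/-- The rank of an arrangement: the dimension of the span of its covectors. -/
noncomputable def rank (A : Arrangement K ℓ) : ℕ :=
  Module.finrank K (Submodule.span K (A.hyps : Set (Fin ℓ → K)))

/-- `A` is reducible: after a linear change of coordinates it is a product of two
arrangements in complementary (nonzero) subspaces.  In terms of covectors: the
covectors split between two complementary nonzero subspaces of the dual space. -/
def Reducible (A : Arrangement K ℓ) : Prop :=
  ∃ W₁ W₂ : Submodule K (Fin ℓ → K), W₁ ≠ ⊥ ∧ W₂ ≠ ⊥ ∧ W₁ ⊓ W₂ = ⊥ ∧ W₁ ⊔ W₂ = ⊤ ∧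
    ∀ c ∈ A.hyps, c ∈ W₁ ∨ c ∈ W₂

/-- The hyperplanes of the localization at a flat; the flat of codimension `r` is
encoded by the `r`-dimensional subspace `U` of the dual space spanned by the
covectors of the hyperplanes containing it. -/
noncomputable def locHyps (A : Arrangement K ℓ) (U : Submodule K (Fin ℓ → K)) :
    Finset (Fin ℓ → K) :=
  A.hyps.filter (· ∈ U)

/-- `U` encodes a flat of `A` of codimension `r` (an element of `L_r(A)`). -/
def IsFlatOfRank (A : Arrangement K ℓ) (U : Submodule K (Fin ℓ → K)) (r : ℕ) : Prop :=
  Module.finrank K U = r ∧ Submodule.span K (locHyps A U : Set (Fin ℓ → K)) = U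

/-- The localization `A_X` of `A` at the flat encoded by `U`. -/
noncomputable def localize (A : Arrangement K ℓ) (U : Submodule K (Fin ℓ → K)) :
    Arrangement K ℓ where
  hyps := locHyps A U
  ne_zero := fun c hc => A.ne_zero c (Finset.mem_filter.mp hc).1
  nonparallel := fun c hc c' hc' =>
    A.nonparallel c (Finset.mem_filter.mp hc).1 c' (Finset.mem_filter.mp hc').1

/-- `H₀` (given by covector `c₀`) is a heavy hyperplane of `(A,m)`. -/
def IsHeavy (A : Arrangement K ℓ) (m : (Fin ℓ → K) → ℕ) (c₀ : Fin ℓ → K) : Prop :=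
  c₀ ∈ A.hyps ∧ (∑ c ∈ A.hyps.erase c₀, m c) ≤ m c₀

/-- `H₀` (given by covector `c₀`) is a locally heavy hyperplane of `(A,m)`. -/
def IsLocallyHeavy (A : Arrangement K ℓ) (m : (Fin ℓ → K) → ℕ) (c₀ : Fin ℓ → K) : Prop :=
  c₀ ∈ A.hyps ∧ ∀ U : Submodule K (Fin ℓ → K), IsFlatOfRank A U 2 → c₀ ∈ U →
    3 ≤ (locHyps A U).card → (∑ c ∈ (locHyps A U).erase c₀, m c) ≤ m c₀

/-- `b` is the second Betti number of the rank-2 localization of `(A,m)` at `U`: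
the product of the nonzero exponents of this free rank-2 multiarrangement. -/
def IsLocalB2 (A : Arrangement K ℓ) (m : (Fin ℓ → K) → ℕ)
    (U : Submodule K (Fin ℓ → K)) (b : ℕ) : Prop :=
  ∃ d : Fin ℓ → ℕ, IsFreeWithExp (localize A U) m d ∧
    b = ∏ i ∈ Finset.univ.filter (fun i => d i ≠ 0), d i

/-- `b` is the second Betti number `b₂(A,m)` of the multiarrangement `(A,m)`. -/
def IsB2 (A : Arrangement K ℓ) (m : (Fin ℓ → K) → ℕ) (b : ℕ) : Prop :=
  ∃ bloc : Submodule K (Fin ℓ → K) → ℕ,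
    (∀ U, IsFlatOfRank A U 2 → IsLocalB2 A m U (bloc U)) ∧
    b = ∑ᶠ U ∈ {U : Submodule K (Fin ℓ → K) | IsFlatOfRank A U 2}, bloc U

/-- The second Betti number of a simple arrangement:
`b₂(A) = Σ_{X ∈ L₂(A)} (|A_X| - 1)`. -/
noncomputable def b2Simple (A : Arrangement K ℓ) : ℕ :=
  ∑ᶠ U ∈ {U : Submodule K (Fin ℓ → K) | IsFlatOfRank A U 2}, ((locHyps A U).card - 1)

/-- The Euler–Ziegler multiplicity of the restricted hyperplane `H₀ ∩ ker(c)` of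
`A^{H₀}`: `m^{H₀}(X) = |m_X| - m(H₀)`. -/
noncomputable def EZmult (A : Arrangement K ℓ) (m : (Fin ℓ → K) → ℕ)
    (c₀ c : Fin ℓ → K) : ℕ :=
  (∑ c' ∈ A.hyps.filter (· ∈ Submodule.span K ({c₀, c} : Set (Fin ℓ → K))), m c') - m c₀

/-- Two covectors are parallel (define the same hyperplane). -/
def Parallel {n : ℕ} (b b' : Fin n → K) : Prop := ∃ t : K, t ≠ 0 ∧ b' = t • b

/-- The covector on `K^n` obtained by restricting the covector `c` on `K^{n+1}` to the
hyperplane `ker c₀`, transported by the linear isomorphism `e : ker c₀ ≃ K^n`. -/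
noncomputable def resCov {n : ℕ} (c₀ : Fin (n+1) → K)
    (e : ↥(LinearMap.ker (toFunc c₀)) ≃ₗ[K] (Fin n → K)) (c : Fin (n+1) → K) :
    Fin n → K :=
  fun j => toFunc c ((e.symm (Pi.single j 1) : ↥(LinearMap.ker (toFunc c₀))) : Fin (n+1) → K)

/-- `(B, mB)` is (a model, in coordinates, of) the Euler–Ziegler restriction
`(A^{H₀}, m^{H₀})` of `(A,m)` to the hyperplane `H₀ = ker c₀ ∈ A`. -/
def IsEZRes {n : ℕ} (A : Arrangement K (n+1)) (m : (Fin (n+1) → K) → ℕ)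
    (c₀ : Fin (n+1) → K) (B : Arrangement K n) (mB : (Fin n → K) → ℕ) : Prop :=
  c₀ ∈ A.hyps ∧
  ∃ e : ↥(LinearMap.ker (toFunc c₀)) ≃ₗ[K] (Fin n → K),
    (∀ c ∈ A.hyps.erase c₀, ∃ b ∈ B.hyps,
        Parallel b (resCov c₀ e c) ∧ mB b = EZmult A m c₀ c) ∧
    (∀ b ∈ B.hyps, ∃ c ∈ A.hyps.erase c₀, Parallel b (resCov c₀ e c))

/-- A combinatorial equivalence between two arrangements: a bijection between the
hyperplanes inducing an isomorphism of intersection lattices (it preserves the rank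
of every subset of hyperplanes). -/
def CombEquiv (A A' : Arrangement K ℓ) : Prop :=
  ∃ φ : (Fin ℓ → K) → (Fin ℓ → K), Set.BijOn φ ↑A.hyps ↑A'.hyps ∧
    ∀ T : Finset (Fin ℓ → K), T ⊆ A.hyps →
      Module.finrank K (Submodule.span K (T : Set (Fin ℓ → K))) =
      Module.finrank K (Submodule.span K ((T.image φ) : Set (Fin ℓ → K)))

/-!
Restriction to the hyperplane `H₀ = ker α₀` maps `D(A,m)` to `D(A^{H₀}, m^{H₀})`. Indeed, on a
rank-two flat with at least three hyperplanes, local heaviness leaves room for an interpolating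
form `q` of degree `m(H₀)`, divisible by `α₀`, such that, writing `θ(α₀) = α₀ ^ m(H₀) g`, the
polynomial `θ(α) - q g` is divisible by `α_H ^ m(H)` for every `H ≠ H₀` of the flat.

Given a homogeneous basis `θᵢ` of `D(A,m)`, expand its Saito determinant, which is `Q(A,m)` up to a
unit, along the column `θᵢ(α₀) = α₀ ^ m(H₀) gᵢ`, cancel `α₀ ^ m(H₀)` and restrict to `H₀`. The
`i`-th minor becomes the Saito determinant of the restrictions of the `θⱼ`, `j ≠ i`, hence a
multiple `hᵢ Q(A^{H₀}, m^{H₀})`, and `∑ᵢ ± gᵢ hᵢ` is a unit on `H₀`. So some `gᵢ` and `hᵢ` have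
nonzero constant terms, and by homogeneity they are constants: `θᵢ` has degree `m(H₀)`, and the
other `θⱼ` restrict to a basis by Saito's criterion.
-/

/-! ### Polynomials over a field -/

lemma isUnit_C {t : K} (ht : t ≠ 0) : IsUnit (C t : S K ℓ) :=
  (IsUnit.mk0 t ht).map C

lemma associated_smul {t : K} (ht : t ≠ 0) (p : S K ℓ) : Associated p (t • p) := by
  rw [smul_eq_C_mul, mul_comm]
  exact associated_mul_unit_right _ _ (isUnit_C ht)

lemma eq_and_isUnit_of_isHomogeneous_mul {σ : Type*} {p q : MvPolynomial σ K} {a b : ℕ}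
    (hp : p.IsHomogeneous a) (hp0 : p ≠ 0) (hpq : (p * q).IsHomogeneous b)
    (hq : constantCoeff q ≠ 0) : a = b ∧ IsUnit q := by
  let _ : GradedAlgebra (homogeneousSubmodule σ K) := gradedAlgebra
  have hcomp : homogeneousComponent a (p * q) = p * C (constantCoeff q) := by
    have decompose_apply (f : MvPolynomial σ K) (i : ℕ) :
        (DirectSum.decompose (homogeneousSubmodule σ K) f i : MvPolynomial σ K) =
          homogeneousComponent i f := decomposition.decompose'_apply f i
    have h := DirectSum.coe_decompose_mul_add_of_left_mem (homogeneousSubmodule σ K) (a := p)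
      (b := q) (i := a) (j := 0) hp
    rwa [decompose_apply, decompose_apply, add_zero, homogeneousComponent_zero] at h
  have hne : p * C (constantCoeff q) ≠ 0 := mul_ne_zero hp0 (C_eq_zero.not.mpr hq)
  rw [homogeneousComponent_of_mem hpq] at hcomp
  obtain rfl : b = a := by
    by_contra hab
    exact hne ((if_neg (Ne.symm hab)).symm.trans hcomp).symm
  rw [if_pos rfl] at hcomp
  rw [mul_left_cancel₀ hp0 hcomp]
  exact ⟨rfl, (IsUnit.mk0 _ hq).map C⟩

/-! ### Linear forms -/

/-- The map `c ↦ linForm c`, bundled so that the `map_*` lemmas apply to it. -/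
noncomputable def linFormHom (K : Type*) [Field K] (ℓ : ℕ) : (Fin ℓ → K) →ₗ[K] S K ℓ :=
  Fintype.linearCombination K X

lemma linFormHom_apply (c : Fin ℓ → K) : linFormHom K ℓ c = linForm c := by
  simp [linFormHom, linForm, Fintype.linearCombination_apply, smul_eq_C_mul]

lemma linForm_zero : linForm (0 : Fin ℓ → K) = 0 := by
  simp only [← linFormHom_apply, map_zero]

lemma linForm_add (c c' : Fin ℓ → K) : linForm (c + c') = linForm c + linForm c' := by
  simp only [← linFormHom_apply, map_add]

lemma linForm_sub (c c' : Fin ℓ → K) : linForm (c - c') = linForm c - linForm c' := by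
  simp only [← linFormHom_apply, map_sub]

lemma linForm_smul (t : K) (c : Fin ℓ → K) : linForm (t • c) = t • linForm c := by
  simp only [← linFormHom_apply, map_smul]

lemma linForm_single (i : Fin ℓ) : linForm (Pi.single i (1 : K)) = X i := by
  simp [← linFormHom_apply, linFormHom, Fintype.linearCombination_apply_single]

lemma coeff_linForm (c : Fin ℓ → K) (i : Fin ℓ) :
    (linForm c).coeff (Finsupp.single i 1) = c i := by
  simp [linForm, coeff_sum, coeff_C_mul, coeff_X, Finsupp.single_left_inj]

lemma linForm_injective : Function.Injective (linForm : (Fin ℓ → K) → S K ℓ) := fun c c' h =>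
  funext fun i => by rw [← coeff_linForm c, h, coeff_linForm]

lemma linForm_ne_zero {c : Fin ℓ → K} (hc : c ≠ 0) : linForm c ≠ 0 :=
  linForm_zero (K := K) ▸ linForm_injective.ne hc

lemma isHomogeneous_linForm (c : Fin ℓ → K) : (linForm c).IsHomogeneous 1 :=
  .sum _ _ _ fun i _ => isHomogeneous_C_mul_X (c i) i

lemma isHomogeneous_linForm_pow (c : Fin ℓ → K) (k : ℕ) : (linForm c ^ k).IsHomogeneous k := by
  simpa using (isHomogeneous_linForm c).pow k

lemma irreducible_linForm {c : Fin ℓ → K} (hc : c ≠ 0) : Irreducible (linForm c) := by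
  obtain ⟨i, hi⟩ := Function.ne_iff.mp hc
  refine irreducible_of_totalDegree_eq_one
    ((isHomogeneous_linForm c).totalDegree (linForm_ne_zero hc)) fun x hx => ?_
  have hx_dvd : x ∣ c i := coeff_linForm c i ▸ hx (Finsupp.single i 1)
  exact isUnit_of_dvd_unit hx_dvd (IsUnit.mk0 _ hi)

lemma isRelPrime_linForm {c c' : Fin ℓ → K} (hc : c ≠ 0) (hc' : c' ≠ 0)
    (h : ∀ t : K, c' ≠ t • c) : IsRelPrime (linForm c) (linForm c') := by
  rw [(irreducible_linForm hc).isRelPrime_iff_not_dvd]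
  intro hdvd
  obtain ⟨u, hu⟩ := (irreducible_linForm hc).associated_of_dvd (irreducible_linForm hc') hdvd
  obtain ⟨t, -, ht⟩ := isUnit_iff_eq_C_of_isReduced.mp u.isUnit
  refine h t (linForm_injective ?_)
  rw [linForm_smul, smul_eq_C_mul, ← hu, ht, mul_comm]

/-! ### Logarithmic derivations -/

lemma der_C_mul (θ : Der K ℓ) (t : K) (p : S K ℓ) : θ (C t * p) = C t * θ p := by
  rw [← smul_eq_C_mul, θ.map_smul, smul_eq_C_mul]

lemma der_linForm (θ : Der K ℓ) (c : Fin ℓ → K) :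
    θ (linForm c) = ∑ i, C (c i) * θ (X i) := by
  simp only [linForm, map_sum, der_C_mul]

lemma Arrangement.isRelPrime (A : Arrangement K ℓ) {c c' : Fin ℓ → K} (hc : c ∈ A.hyps)
    (hc' : c' ∈ A.hyps) (h : c ≠ c') : IsRelPrime (linForm c) (linForm c') :=
  isRelPrime_linForm (A.ne_zero c hc) (A.ne_zero c' hc') (A.nonparallel c hc c' hc' h)

/-- The defining polynomial `Q(A,m) = ∏ α_H ^ m(H)` of a multiarrangement, to which Saito's
criterion compares the determinant of a family of logarithmic derivations. -/
noncomputable def definingPoly (A : Arrangement K ℓ) (m : (Fin ℓ → K) → ℕ) : S K ℓ :=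
  ∏ c ∈ A.hyps, linForm c ^ m c

section DefiningPoly

variable {A : Arrangement K ℓ} {m : (Fin ℓ → K) → ℕ}

lemma definingPoly_ne_zero : definingPoly A m ≠ 0 :=
  Finset.prod_ne_zero_iff.mpr fun c hc => pow_ne_zero _ (linForm_ne_zero (A.ne_zero c hc))

lemma isHomogeneous_definingPoly : (definingPoly A m).IsHomogeneous (msum A m) :=
  .prod _ _ _ fun c _ => isHomogeneous_linForm_pow c (m c)

lemma definingPoly_eq_mul_prod_erase {c : Fin ℓ → K} (hc : c ∈ A.hyps) :
    definingPoly A m = linForm c ^ m c * ∏ c' ∈ A.hyps.erase c, linForm c' ^ m c' :=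
  (Finset.mul_prod_erase _ (fun c' => linForm c' ^ m c') hc).symm

lemma prod_pow_linForm_dvd {s : Finset (Fin ℓ → K)} (hs : s ⊆ A.hyps) {p : S K ℓ}
    (h : ∀ c ∈ s, linForm c ^ m c ∣ p) : ∏ c ∈ s, linForm c ^ m c ∣ p :=
  Finset.prod_dvd_of_isRelPrime
    (fun _ hc _ hc' hne => (A.isRelPrime (hs hc) (hs hc') hne).pow) h

end DefiningPoly

/-! ### Saito's criterion -/

/-- The Saito matrix `(θᵢ(xⱼ))` of a family of derivations. -/
noncomputable def saitoMatrix {ι : Type*} (θ : ι → Der K ℓ) : Matrix ι (Fin ℓ) (S K ℓ) :=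
  Matrix.of fun i j => θ i (X j)

open Matrix in
lemma of_der_linForm_eq_saitoMatrix_mul {ι κ : Type*} (θ : ι → Der K ℓ)
    (M : Matrix κ (Fin ℓ) K) :
    of (fun i j => θ i (linForm (M j))) = saitoMatrix θ * (M.map (C : K →+* S K ℓ))ᵀ := by
  ext1 i j
  simp only [of_apply, mul_apply, der_linForm, saitoMatrix, transpose_apply, map_apply, mul_comm]

lemma det_of_der_linForm (θ : Fin ℓ → Der K ℓ) (M : Matrix (Fin ℓ) (Fin ℓ) K) :
    (Matrix.of fun i j => θ i (linForm (M j))).det = (saitoMatrix θ).det * C M.det := by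
  rw [of_der_linForm_eq_saitoMatrix_mul, Matrix.det_mul, Matrix.det_transpose, RingHom.map_det]
  rfl

lemma isHomogeneous_det_saitoMatrix {θ : Fin ℓ → Der K ℓ} {d : Fin ℓ → ℕ}
    (hθ : ∀ i, IsHomogOfDeg (θ i) (d i)) : (saitoMatrix θ).det.IsHomogeneous (∑ i, d i) := by
  rw [← Matrix.det_transpose, Matrix.det_apply]
  refine .sum _ _ _ fun σ _ => ?_
  have hprod : (∏ i, θ i (X (σ i))).IsHomogeneous (∑ i, d i) :=
    .prod _ _ _ fun i _ => linForm_single (K := K) (σ i) ▸ hθ i _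
  rw [Units.smul_def, ← mem_homogeneousSubmodule]
  exact zsmul_mem hprod _

open Matrix in
lemma eq_sum_smul_iff_vecMul_saitoMatrix {θ : Fin ℓ → Der K ℓ} {η : Der K ℓ}
    {f : Fin ℓ → S K ℓ} :
    η = ∑ i, f i • θ i ↔ f ᵥ* saitoMatrix θ = fun j => η (X j) := by
  have hsum (j : Fin ℓ) : (∑ i, f i • θ i) (X j) = (f ᵥ* saitoMatrix θ) j :=
    (congrFun (map_sum Derivation.coeFnAddMonoidHom (fun i => f i • θ i) Finset.univ) _).trans
      (Finset.sum_apply _ _ _)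
  refine ⟨fun h => funext fun j => by rw [h, hsum], fun h => derivation_ext fun j => ?_⟩
  rw [hsum, h]

open Matrix in
lemma det_smul_eq_sum_det_update_smul (θ : Fin ℓ → Der K ℓ) (η : Der K ℓ) :
    (saitoMatrix θ).det • η = ∑ i, (saitoMatrix (Function.update θ i η)).det • θ i := by
  have hupdate (i : Fin ℓ) : (saitoMatrix (Function.update θ i η)).det =
      (saitoMatrix θ)ᵀ.cramer (fun j => η (X j)) i := by
    rw [cramer_transpose_apply]
    congr 1
    ext1 k j
    rcases eq_or_ne k i with rfl | hk
    · simp [saitoMatrix]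
    · simp [saitoMatrix, hk]
  rw [eq_sum_smul_iff_vecMul_saitoMatrix]
  simp only [hupdate, ← mulVec_transpose]
  rw [mulVec_cramer, det_transpose]
  rfl

section Saito

variable {A : Arrangement K ℓ} {m : (Fin ℓ → K) → ℕ} {θ : Fin ℓ → Der K ℓ}

lemma definingPoly_dvd_det_saitoMatrix (h : ∀ i, IsLogDer A m (θ i)) :
    definingPoly A m ∣ (saitoMatrix θ).det := by
  refine prod_pow_linForm_dvd subset_rfl fun c hc => ?_
  obtain ⟨j, hj⟩ := Function.ne_iff.mp (A.ne_zero c hc)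
  choose q hq using fun i => h i c hc
  have hcol : (fun k => ∑ i, (C (c i) : S K ℓ) • saitoMatrix θ k i) = (linForm c ^ m c) • q :=
    funext fun k => ((hq k).symm.trans (der_linForm (θ k) c)).symm
  have hdet := Matrix.det_updateCol_sum (saitoMatrix θ) j fun i => C (c i)
  rw [hcol, Matrix.det_updateCol_smul] at hdet
  exact (isUnit_C hj).dvd_mul_left.mp (Dvd.intro _ hdet)

theorem isDerBasis_of_associated_det (h : ∀ i, IsLogDer A m (θ i))
    (hdet : Associated (definingPoly A m) (saitoMatrix θ).det) : IsDerBasis A m θ := by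
  have hdet_ne : (saitoMatrix θ).det ≠ 0 := hdet.ne_zero_iff.mp definingPoly_ne_zero
  refine ⟨h, fun η hη => ?_⟩
  have hdvd (i : Fin ℓ) : (saitoMatrix θ).det ∣ (saitoMatrix (Function.update θ i η)).det :=
    hdet.symm.dvd.trans <| definingPoly_dvd_det_saitoMatrix <|
      (Function.forall_update_iff θ fun _ => IsLogDer A m).mpr ⟨hη, fun k _ => h k⟩
  choose f hf using hdvd
  have hη_eq : η = ∑ i, f i • θ i := by
    have hcramer := det_smul_eq_sum_det_update_smul θ η
    simp only [hf, mul_smul, ← Finset.smul_sum] at hcramer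
    exact derivation_ext fun j =>
      mul_left_cancel₀ hdet_ne (congrArg (fun D : Der K ℓ => D (X j)) hcramer)
  refine ⟨f, hη_eq, fun f' hf' => sub_eq_zero.mp (Matrix.eq_zero_of_vecMul_eq_zero hdet_ne ?_)⟩
  rw [Matrix.sub_vecMul, eq_sum_smul_iff_vecMul_saitoMatrix.mp hf',
    eq_sum_smul_iff_vecMul_saitoMatrix.mp hη_eq, sub_self]

lemma IsDerBasis.det_saitoMatrix_dvd (hθ : IsDerBasis A m θ) {η : Fin ℓ → Der K ℓ}
    (hη : ∀ i, IsLogDer A m (η i)) : (saitoMatrix θ).det ∣ (saitoMatrix η).det := by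
  choose f hf _ using fun i => hθ.2 (η i) (hη i)
  have hmul : saitoMatrix η = Matrix.of f * saitoMatrix θ := Matrix.ext fun i j =>
    (congrFun (eq_sum_smul_iff_vecMul_saitoMatrix.mp (hf i)) j).symm
  rw [hmul, Matrix.det_mul]
  exact dvd_mul_left _ _

open Matrix in
lemma IsDerBasis.det_saitoMatrix_dvd_prod (hθ : IsDerBasis A m θ) {D : Fin ℓ → S K ℓ}
    {M : Matrix (Fin ℓ) (Fin ℓ) K} (hM : M.det ≠ 0)
    (h : ∀ i, ∀ c ∈ A.hyps, linForm c ^ m c ∣ D i ∨ (M *ᵥ c) i = 0) :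
    (saitoMatrix θ).det ∣ ∏ i, D i := by
  let η (i : Fin ℓ) : Der K ℓ := mkDerivation K fun l => D i * C (M i l)
  have hη_X (i l : Fin ℓ) : η i (X l) = D i * C (M i l) := mkDerivation_X _ _ _
  have hη_linForm (i : Fin ℓ) (c : Fin ℓ → K) : η i (linForm c) = D i * C ((M *ᵥ c) i) := by
    simp only [der_linForm, hη_X, mulVec, dotProduct, map_sum, Finset.mul_sum, C_mul]
    exact Finset.sum_congr rfl fun l _ => by ring
  have hdet : (saitoMatrix η).det = (∏ i, D i) * C M.det := by
    have hη : saitoMatrix η = of fun i l => D i * M.map C i l := Matrix.ext hη_X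
    rw [hη, det_mul_column, RingHom.map_det]
    rfl
  rw [← (isUnit_C hM).dvd_mul_right, ← hdet]
  refine hθ.det_saitoMatrix_dvd fun i c hc => ?_
  rw [hη_linForm]
  rcases h i c hc with hdvd | hzero
  · exact hdvd.mul_right _
  · simp [hzero]

open Matrix in
lemma exists_det_eq_one_mulVec_eq_zero {c : Fin ℓ → K} (hc : c ≠ 0) :
    ∃ (M : Matrix (Fin ℓ) (Fin ℓ) K) (j : Fin ℓ), M.det = 1 ∧ ∀ i ≠ j, (M *ᵥ c) i = 0 := by
  obtain ⟨j, hj : c j ≠ 0⟩ := Function.ne_iff.mp hc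
  let u : Fin ℓ → K := fun i => if i = j then 0 else -(c i / c j)
  refine ⟨1 + vecMulVec u (Pi.single j (1 : K)), j, ?_, fun i hi => ?_⟩
  · simp [vecMulVec_eq Unit, det_one_add_replicateCol_mul_replicateRow, u]
  · simp [add_mulVec, vecMulVec_mulVec, u, hi, mul_div_cancel₀ _ hj]

lemma IsDerBasis.det_saitoMatrix_dvd_definingPoly_mul (hθ : IsDerBasis A m θ) {c : Fin ℓ → K}
    (hc : c ∈ A.hyps) :
    (saitoMatrix θ).det ∣
      definingPoly A m * (∏ c' ∈ A.hyps.erase c, linForm c' ^ m c') ^ (ℓ - 1) := by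
  set R : S K ℓ := ∏ c' ∈ A.hyps.erase c, linForm c' ^ m c'
  obtain ⟨M, j, hM, hMc⟩ := exists_det_eq_one_mulVec_eq_zero (A.ne_zero c hc)
  have hprod : ∏ i, Function.update (fun _ => R) j (definingPoly A m) i =
      definingPoly A m * R ^ (ℓ - 1) := by
    simp [Finset.prod_update_of_mem, Finset.card_sdiff]
  rw [← hprod]
  refine hθ.det_saitoMatrix_dvd_prod (hM ▸ one_ne_zero) fun i c' hc' => ?_
  rcases eq_or_ne i j with rfl | hij
  · rw [Function.update_self]
    exact .inl (Finset.dvd_prod_of_mem _ hc')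
  rw [Function.update_of_ne hij]
  rcases eq_or_ne c' c with rfl | hne
  · exact .inr (hMc i hij)
  · exact .inl (Finset.dvd_prod_of_mem _ (Finset.mem_erase.mpr ⟨hne, hc'⟩))

lemma exists_dvd_linForm_of_dvd_prod {s : Finset (Fin ℓ → K)} {p : S K ℓ} (hp : Prime p) {k : ℕ}
    (h : p ∣ (∏ c ∈ s, linForm c ^ m c) ^ k) : ∃ c ∈ s, p ∣ linForm c := by
  obtain ⟨c, hc, hpc⟩ := (hp.dvd_finsetProd_iff _).mp (hp.dvd_of_dvd_pow h)
  exact ⟨c, hc, hp.dvd_of_dvd_pow hpc⟩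

-- A prime factor of the cofactor `det / Q` would divide two distinct forms `α_H`.
theorem IsDerBasis.associated_det (hθ : IsDerBasis A m θ) :
    Associated (definingPoly A m) (saitoMatrix θ).det := by
  obtain ⟨u, hu⟩ := definingPoly_dvd_det_saitoMatrix hθ.1
  have hdet_dvd : (saitoMatrix θ).det ∣ definingPoly A m ^ ℓ := by
    simpa using hθ.det_saitoMatrix_dvd_prod (D := fun _ => definingPoly A m) (M := 1) (by simp)
      fun i c hc => .inl (Finset.dvd_prod_of_mem _ hc)
  have hu_dvd : ∀ c ∈ A.hyps, u ∣ (∏ c' ∈ A.hyps.erase c, linForm c' ^ m c') ^ (ℓ - 1) :=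
    fun c hc => (mul_dvd_mul_iff_left definingPoly_ne_zero).mp
      (hu ▸ hθ.det_saitoMatrix_dvd_definingPoly_mul hc)
  have hu_dvd_pow : u ∣ definingPoly A m ^ ℓ := (Dvd.intro_left _ hu.symm).trans hdet_dvd
  suffices hunit : IsUnit u from hu ▸ associated_mul_unit_right _ _ hunit
  by_contra hu_unit
  obtain ⟨p, hp, hpu⟩ := WfDvdMonoid.exists_irreducible_factor hu_unit
    (ne_zero_of_dvd_ne_zero (pow_ne_zero _ definingPoly_ne_zero) hu_dvd_pow)
  obtain ⟨c, hc, hpc⟩ := exists_dvd_linForm_of_dvd_prod hp.prime (hpu.trans hu_dvd_pow)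
  obtain ⟨c', hc', hpc'⟩ := exists_dvd_linForm_of_dvd_prod hp.prime (hpu.trans (hu_dvd c hc))
  obtain ⟨hne, hc'A⟩ := Finset.mem_erase.mp hc'
  exact hp.not_isUnit (A.isRelPrime hc'A hc hne hpc' hpc)

end Saito

/-! ### Interpolation -/

section Interpolation

lemma exists_degree_lt_forall_dvd_sub {R ι : Type*} [CommRing R] [Nontrivial R] (F : Finset ι)
    {l : ι → Polynomial R} (hl : ∀ i ∈ F, (l i).Monic)
    (hco : (F : Set ι).Pairwise (Function.onFun IsCoprime l)) (f : ι → Polynomial R) :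
    ∃ q : Polynomial R, q.degree < (∏ i ∈ F, l i).degree ∧ ∀ i ∈ F, l i ∣ q - f i := by
  have hco' : Pairwise (Function.onFun IsCoprime fun i : F => Ideal.span {l i}) :=
    fun i j hij => Ideal.isCoprime_span_singleton_iff _ _ |>.mpr
      (hco i.2 j.2 (Subtype.coe_injective.ne hij))
  obtain ⟨r, hr⟩ := Ideal.exists_forall_sub_mem_ideal hco' fun i : F => f i
  refine ⟨r %ₘ ∏ i ∈ F, l i,
    Polynomial.degree_modByMonic_lt _ (Polynomial.monic_prod_of_monic _ _ hl), fun i hi => ?_⟩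
  have hdvd : l i ∣ r - f i := Ideal.mem_span_singleton.mp (hr ⟨i, hi⟩)
  rw [Polynomial.modByMonic_eq_sub_mul_div, sub_right_comm]
  exact dvd_sub hdvd ((Finset.dvd_prod_of_mem l hi).mul_right _)

lemma homogenize_eq_mul_X_one_pow {R : Type*} [CommSemiring R] {q : Polynomial R} {k : ℕ}
    (hq : q.natDegree ≤ k) :
    q.homogenize k = q.homogenize q.natDegree * X 1 ^ (k - q.natDegree) := by
  conv_lhs => rw [← mul_one q, ← Nat.add_sub_of_le hq]
  rw [Polynomial.homogenize_mul _ _ le_rfl (by simp), Polynomial.homogenize_one]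

lemma homogenize_dvd_homogenize {R : Type*} [CommSemiring R] [NoZeroDivisors R]
    {p q : Polynomial R} {k : ℕ} (h : p ∣ q) (hq : q.natDegree ≤ k) :
    p.homogenize p.natDegree ∣ q.homogenize k :=
  homogenize_eq_mul_X_one_pow hq ▸ (Polynomial.homogenize_dvd h).mul_right _

lemma X_one_dvd_homogenize {R : Type*} [CommSemiring R] {q : Polynomial R} {k : ℕ}
    (hq : q.degree < k) : X 1 ∣ q.homogenize k := by
  rcases eq_or_ne q 0 with rfl | hq0
  · simp
  have hlt : q.natDegree < k := (Polynomial.natDegree_lt_iff_degree_lt hq0).mpr hq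
  rw [homogenize_eq_mul_X_one_pow hlt.le]
  exact (dvd_pow_self _ (Nat.sub_ne_zero_of_lt hlt)).mul_left _

variable {R : Type*} [CommRing R] [Algebra K R] {y z : R}

lemma pow_dvd_aeval_homogenize_sub {q : Polynomial K} {a : K} {k m : ℕ} (hq : q.natDegree ≤ k)
    (h : (Polynomial.X - Polynomial.C a) ^ m ∣ q - Polynomial.C a) :
    (y - a • z) ^ m ∣ aeval ![y, z] (q.homogenize k) - a • z ^ k := by
  have hpow : ((Polynomial.X - Polynomial.C a) ^ m).homogenize m = (X 0 - C a * X 1) ^ m :=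
    Polynomial.homogenize_eq_of_isHomogeneous
      (by simpa using ((isHomogeneous_X K 0).sub (isHomogeneous_C_mul_X a 1)).pow m) (by simp)
  have hdvd := homogenize_dvd_homogenize h (k := k) (by simpa using hq)
  rw [Polynomial.natDegree_pow, Polynomial.natDegree_X_sub_C, mul_one, hpow,
    Polynomial.homogenize_sub, Polynomial.homogenize_C] at hdvd
  simpa [Algebra.smul_def] using map_dvd (aeval ![y, z]) hdvd

lemma isRelPrime_sub_smul (hyz : IsRelPrime y z) {a b : K} (hab : a ≠ b) :
    IsRelPrime (y - a • z) (y - b • z) := by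
  intro d ha hb
  have hz : d ∣ z := by
    have hdvd : d ∣ (b - a) • z := by
      convert! dvd_sub ha hb using 1
      module
    simpa [smul_smul, inv_mul_cancel₀ (sub_ne_zero.mpr hab.symm)] using
      dvd_smul_of_dvd (b - a)⁻¹ hdvd
  refine hyz ?_ hz
  simpa using dvd_add ha (dvd_smul_of_dvd a hz)

-- Homogenizing an interpolation polynomial `q` with `q ≡ aᵢ` modulo `(x - aᵢ) ^ mᵢ` and
-- `deg q < k` gives a multiple `q(y, z)` of `z`; then `z * s = q(y, z) * g`.
lemma exists_prod_dvd_sub_mul [IsDomain R] [DecompositionMonoid R] {ι : Type*} {F : Finset ι}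
    {a : ι → K} (ha : Set.InjOn a F) {m : ι → ℕ} {k : ℕ} (hk : ∑ i ∈ F, m i ≤ k) {p g : R}
    (hyz : IsRelPrime y z) (h : ∀ i ∈ F, (y - a i • z) ^ m i ∣ p - a i • (z ^ k * g)) :
    ∃ s, ∏ i ∈ F, (y - a i • z) ^ m i ∣ p - z * s := by
  obtain ⟨q, hq_deg, hq⟩ := exists_degree_lt_forall_dvd_sub F
    (l := fun i => (Polynomial.X - Polynomial.C (a i)) ^ m i)
    (fun i _ => (Polynomial.monic_X_sub_C _).pow _)
    (fun i hi j hj hij => (Polynomial.isCoprime_X_sub_C_of_isUnit_sub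
      (IsUnit.mk0 _ (sub_ne_zero.mpr (ha.ne hi hj hij)))).pow)
    (fun i => Polynomial.C (a i))
  have hq_lt : q.degree < k := by
    refine hq_deg.trans_le ?_
    simp only [Polynomial.degree_prod, Polynomial.degree_pow, Polynomial.degree_X_sub_C]
    simpa using mod_cast hk
  obtain ⟨s, hs⟩ := map_dvd (aeval ![y, z]) (X_one_dvd_homogenize hq_lt)
  refine ⟨s * g, Finset.prod_dvd_of_isRelPrime
    (fun i hi j hj hij => (isRelPrime_sub_smul hyz (ha.ne hi hj hij)).pow) fun i hi => ?_⟩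
  have hdvd := (pow_dvd_aeval_homogenize_sub (y := y) (z := z)
    (Polynomial.natDegree_le_of_degree_le hq_lt.le) (hq i hi)).mul_right g
  have hz : aeval ![y, z] (X 1 : MvPolynomial (Fin 2) K) = z := by simp
  rw [hs, hz] at hdvd
  convert! dvd_sub (h i hi) hdvd using 1
  simp only [sub_mul, smul_mul_assoc]
  ring

end Interpolation

/-! ### Restriction to a hyperplane -/

section Restriction

variable {n : ℕ} {c₀ : Fin (n + 1) → K} (e : LinearMap.ker (toFunc c₀) ≃ₗ[K] (Fin n → K))

lemma toFunc_eq_dotProductEquiv (c : Fin ℓ → K) : toFunc c = dotProductEquiv K (Fin ℓ) c :=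
  LinearMap.ext fun v => by simp [toFunc, dotProduct]

/-- The map `c ↦ resCov c₀ e c`, bundled as the transpose of the inclusion of `ker c₀`. -/
noncomputable def resCovHom : (Fin (n + 1) → K) →ₗ[K] (Fin n → K) :=
  (dotProductEquiv K (Fin n)).symm ∘ₗ
    ((LinearMap.ker (toFunc c₀)).subtype ∘ₗ e.symm.toLinearMap).dualMap ∘ₗ
      (dotProductEquiv K (Fin (n + 1))).toLinearMap

lemma resCovHom_apply (c : Fin (n + 1) → K) : resCovHom e c = resCov c₀ e c := by
  ext j
  simp [resCovHom, resCov, toFunc_eq_dotProductEquiv]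

lemma resCovHom_surjective : Function.Surjective (resCovHom e) := by
  have hinj : Function.Injective
      ((LinearMap.ker (toFunc c₀)).subtype ∘ₗ e.symm.toLinearMap) :=
    (Submodule.subtype_injective _).comp e.symm.injective
  exact (dotProductEquiv K (Fin n)).symm.surjective.comp
    ((LinearMap.dualMap_surjective_of_injective hinj).comp
      (dotProductEquiv K (Fin (n + 1))).surjective)

lemma resCov_self : resCov c₀ e c₀ = 0 :=
  funext fun j => (e.symm (Pi.single j 1)).2

lemma exists_eq_smul_of_resCov_eq_zero {c : Fin (n + 1) → K} (h : resCov c₀ e c = 0) :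
    ∃ t : K, c = t • c₀ := by
  have hdual : toFunc c ∘ₗ (LinearMap.ker (toFunc c₀)).subtype ∘ₗ e.symm.toLinearMap = 0 := by
    rw [toFunc_eq_dotProductEquiv c]
    exact (dotProductEquiv K (Fin n)).symm.map_eq_zero_iff.mp ((resCovHom_apply e c).trans h)
  have hker : ⨅ _ : Unit, LinearMap.ker (toFunc c₀) ≤ LinearMap.ker (toFunc c) := fun v hv => by
    simpa using LinearMap.congr_fun hdual (e ⟨v, by simpa using hv⟩)
  obtain ⟨t, ht⟩ : ∃ t : K, t • toFunc c₀ = toFunc c := by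
    simpa [Submodule.mem_span_singleton] using mem_span_of_iInf_ker_le_ker hker
  refine ⟨t, (dotProductEquiv K (Fin (n + 1))).injective ?_⟩
  rw [map_smul, ← toFunc_eq_dotProductEquiv, ← toFunc_eq_dotProductEquiv, ht]

lemma exists_eq_smul_add_smul {c c' : Fin (n + 1) → K} {t : K}
    (h : resCov c₀ e c' = t • resCov c₀ e c) : ∃ s : K, c' = s • c₀ + t • c := by
  obtain ⟨s, hs⟩ := exists_eq_smul_of_resCov_eq_zero e (c := c' - t • c) <| by
    rw [← resCovHom_apply, map_sub, map_smul, resCovHom_apply, resCovHom_apply, h, sub_self]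
  exact ⟨s, eq_add_of_sub_eq hs⟩

/-- A linear section of `resCovHom e`: it extends covectors on `ker c₀` to the whole space. -/
noncomputable def extCov : (Fin n → K) →ₗ[K] (Fin (n + 1) → K) :=
  ((resCovHom e).exists_rightInverse_of_surjective
    (LinearMap.range_eq_top.mpr (resCovHom_surjective e))).choose

lemma resCov_extCov (b : Fin n → K) : resCov c₀ e (extCov e b) = b :=
  (resCovHom_apply e _).symm.trans <| LinearMap.congr_fun
    ((resCovHom e).exists_rightInverse_of_surjective
      (LinearMap.range_eq_top.mpr (resCovHom_surjective e))).choose_spec b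

/-- A basis of the space of covectors whose `0`-th row is `c₀` and whose other rows restrict to
the coordinates of `ker c₀`. -/
noncomputable def adaptedFrame : Matrix (Fin (n + 1)) (Fin (n + 1)) K :=
  Matrix.of (Fin.cons c₀ fun j => extCov e (Pi.single j 1))

lemma det_adaptedFrame_ne_zero (hc₀ : c₀ ≠ 0) : (adaptedFrame e).det ≠ 0 := by
  rw [← isUnit_iff_ne_zero, ← Matrix.isUnit_iff_isUnit_det,
    ← Matrix.linearIndependent_rows_iff_isUnit]
  have hcoord : LinearIndependent K (fun j => extCov e (Pi.single j 1)) := by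
    refine LinearIndependent.of_comp (resCovHom e) ?_
    convert! Pi.linearIndependent_single_one (Fin n) K using 2
    simp [resCovHom_apply, resCov_extCov]
  refine linearIndependent_finCons.mpr ⟨hcoord, fun hmem => hc₀ ?_⟩
  obtain ⟨b, hb⟩ : ∃ b, extCov e b = c₀ := by
    rw [← LinearMap.mem_range]
    exact Submodule.span_le.mpr
      (Set.range_subset_iff.mpr fun j => LinearMap.mem_range_self _ _) hmem
  rw [← hb, ← resCov_extCov e b, hb, resCov_self, map_zero]

/-- Restriction of polynomials to `ker c₀`. -/
noncomputable def resHom : S K (n + 1) →ₐ[K] S K n :=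
  aeval fun i => linForm (resCov c₀ e (Pi.single i 1))

lemma resHom_linForm (c : Fin (n + 1) → K) :
    resHom e (linForm c) = linForm (resCov c₀ e c) := by
  suffices h : (resHom e).toLinearMap ∘ₗ linFormHom K (n + 1) =
      linFormHom K n ∘ₗ resCovHom e by
    simpa [linFormHom_apply, resCovHom_apply] using LinearMap.congr_fun h c
  refine LinearMap.pi_ext' fun i => LinearMap.ext_ring ?_
  simp [linFormHom_apply, resCovHom_apply, linForm_single, resHom]

lemma resHom_linForm_self : resHom e (linForm c₀) = 0 := by
  rw [resHom_linForm, resCov_self, linForm_zero]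

lemma constantCoeff_resHom (p : S K (n + 1)) :
    constantCoeff (resHom e p) = constantCoeff p := by
  have hlin (c : Fin n → K) : constantCoeff (linForm c) = 0 := by simp [linForm]
  induction p using MvPolynomial.induction_on with
  | C t => simp [resHom]
  | add p q hp hq => simp only [map_add, hp, hq]
  | mul_X p i _ => simp [resHom, hlin]

/-- The derivation of the coordinate ring of `ker c₀` induced by a derivation of the ambient ring.
It depends on the choice of the extensions `extCov e` unless the derivation preserves the ideal of
`ker c₀`. -/
noncomputable def resDer (θ : Der K (n + 1)) : Der K n :=
  mkDerivation K fun j => resHom e (θ (linForm (extCov e (Pi.single j 1))))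

lemma resDer_linForm (θ : Der K (n + 1)) (b : Fin n → K) :
    resDer e θ (linForm b) = resHom e (θ (linForm (extCov e b))) := by
  suffices h : (resDer e θ).toLinearMap ∘ₗ linFormHom K n =
      (resHom e).toLinearMap ∘ₗ θ.toLinearMap ∘ₗ linFormHom K (n + 1) ∘ₗ extCov e by
    simpa [linFormHom_apply] using LinearMap.congr_fun h b
  refine LinearMap.pi_ext' fun j => LinearMap.ext_ring ?_
  simp [linFormHom_apply, linForm_single, resDer, mkDerivation_X]

lemma isHomogOfDeg_resDer {θ : Der K (n + 1)} {d : ℕ} (hθ : IsHomogOfDeg θ d) :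
    IsHomogOfDeg (resDer e θ) d := fun b => by
  rw [resDer_linForm]
  exact one_mul d ▸ (hθ (extCov e b)).aeval _ fun i => isHomogeneous_linForm _

lemma resDer_linForm_resCov {θ : Der K (n + 1)} (hθ : linForm c₀ ∣ θ (linForm c₀))
    (c : Fin (n + 1) → K) :
    resDer e θ (linForm (resCov c₀ e c)) = resHom e (θ (linForm c)) := by
  obtain ⟨t, ht⟩ := exists_eq_smul_add_smul e (c := extCov e (resCov c₀ e c)) (c' := c) (t := 1)
    (by rw [one_smul, resCov_extCov])
  rw [one_smul] at ht
  have hzero : resHom e (θ (linForm c₀)) = 0 :=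
    zero_dvd_iff.mp (resHom_linForm_self e ▸ map_dvd (resHom e) hθ)
  have hθc : θ (linForm c) = t • θ (linForm c₀) + θ (linForm (extCov e (resCov c₀ e c))) := by
    rw [← θ.map_smul, ← map_add, ← linForm_smul, ← linForm_add, ← ht]
  rw [resDer_linForm, hθc, map_add, map_smul, hzero, smul_zero, zero_add]

end Restriction

/-! ### Euler–Ziegler restriction -/

section Parallel

variable {b b' b'' : Fin ℓ → K}

lemma Parallel.symm (h : Parallel b b') : Parallel b' b := by
  obtain ⟨t, ht, rfl⟩ := h
  exact ⟨t⁻¹, inv_ne_zero ht, (inv_smul_smul₀ ht b).symm⟩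

lemma Parallel.trans (h : Parallel b b') (h' : Parallel b' b'') : Parallel b b'' := by
  obtain ⟨t, ht, rfl⟩ := h
  obtain ⟨t', ht', rfl⟩ := h'
  exact ⟨t' * t, mul_ne_zero ht' ht, smul_smul t' t b⟩

lemma Parallel.associated_linForm (h : Parallel b b') : Associated (linForm b) (linForm b') := by
  obtain ⟨t, ht, rfl⟩ := h
  exact linForm_smul t b ▸ associated_smul ht _

lemma Parallel.associated_der_linForm (h : Parallel b b') (θ : Der K ℓ) :
    Associated (θ (linForm b)) (θ (linForm b')) := by
  obtain ⟨t, ht, rfl⟩ := h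
  rw [linForm_smul, θ.map_smul]
  exact associated_smul ht _

lemma Arrangement.eq_of_parallel {A : Arrangement K ℓ} (hb : b ∈ A.hyps) (hb' : b' ∈ A.hyps)
    (h : Parallel b b') : b = b' := by
  obtain ⟨t, -, ht⟩ := h
  by_contra hne
  exact A.nonparallel b hb b' hb' hne t ht

end Parallel

/-- The hyperplanes other than `c₀` that cut out the same hyperplane of `ker c₀` as `c`. -/
noncomputable def fiberHyps (A : Arrangement K ℓ) (c₀ c : Fin ℓ → K) : Finset (Fin ℓ → K) :=
  (locHyps A (Submodule.span K {c₀, c})).erase c₀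

section FiberHyps

variable {A : Arrangement K ℓ} {m : (Fin ℓ → K) → ℕ} {c₀ c c' : Fin ℓ → K}

lemma mem_fiberHyps :
    c' ∈ fiberHyps A c₀ c ↔ c' ∈ A.hyps.erase c₀ ∧ c' ∈ Submodule.span K {c₀, c} := by
  simp only [fiberHyps, locHyps, Finset.mem_erase, Finset.mem_filter, and_assoc]

lemma mem_hyps_of_mem_fiberHyps (h : c' ∈ fiberHyps A c₀ c) : c' ∈ A.hyps :=
  Finset.mem_of_mem_erase (mem_fiberHyps.mp h).1

lemma self_mem_fiberHyps (hc : c ∈ A.hyps.erase c₀) : c ∈ fiberHyps A c₀ c :=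
  mem_fiberHyps.mpr ⟨hc, Submodule.subset_span (by simp)⟩

lemma self_mem_locHyps_span_pair (hc₀ : c₀ ∈ A.hyps) :
    c₀ ∈ locHyps A (Submodule.span K {c₀, c}) :=
  Finset.mem_filter.mpr ⟨hc₀, Submodule.subset_span (by simp)⟩

lemma EZmult_eq_sum_fiberHyps (hc₀ : c₀ ∈ A.hyps) :
    EZmult A m c₀ c = ∑ c' ∈ fiberHyps A c₀ c, m c' :=
  Nat.sub_eq_of_eq_add' (Finset.add_sum_erase _ m (self_mem_locHyps_span_pair hc₀)).symm

lemma exists_parallel_sub_smul (hc₀ : c₀ ∈ A.hyps) (h : c' ∈ fiberHyps A c₀ c) :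
    ∃ a : K, Parallel (c - a • c₀) c' := by
  obtain ⟨hc', hspan⟩ := mem_fiberHyps.mp h
  obtain ⟨hne, hA⟩ := Finset.mem_erase.mp hc'
  obtain ⟨x, y, rfl⟩ := Submodule.mem_span_pair.mp hspan
  have hy : y ≠ 0 := by
    rintro rfl
    exact A.nonparallel c₀ hc₀ _ hA hne.symm x (by simp)
  refine ⟨-(x / y), y, hy, ?_⟩
  rw [neg_smul, sub_neg_eq_add, smul_add, smul_smul, mul_div_cancel₀ _ hy, add_comm]

lemma isFlatOfRank_span_pair (hc₀ : c₀ ∈ A.hyps) (hc : c ∈ A.hyps.erase c₀) :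
    IsFlatOfRank A (Submodule.span K {c₀, c}) 2 := by
  obtain ⟨hne, hcA⟩ := Finset.mem_erase.mp hc
  constructor
  · have hindep : LinearIndependent K ![c₀, c] :=
      (LinearIndependent.pair_iff' (A.ne_zero c₀ hc₀)).mpr fun t ht =>
        A.nonparallel c₀ hc₀ c hcA hne.symm t ht.symm
    have hrank := finrank_span_eq_card hindep
    rwa [Matrix.range_cons_cons_empty, Fintype.card_fin] at hrank
  · refine le_antisymm (Submodule.span_le.mpr fun x hx => (Finset.mem_filter.mp hx).2)
      (Submodule.span_mono ?_)
    exact Set.pair_subset (self_mem_locHyps_span_pair hc₀)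
      (Finset.mem_of_mem_erase (self_mem_fiberHyps hc))

lemma IsLocallyHeavy.sum_fiberHyps_le (h : IsLocallyHeavy A m c₀) (hc : c ∈ A.hyps.erase c₀)
    (hcard : 1 < (fiberHyps A c₀ c).card) : ∑ c' ∈ fiberHyps A c₀ c, m c' ≤ m c₀ := by
  refine h.2 _ (isFlatOfRank_span_pair h.1 hc) (Submodule.subset_span (by simp)) ?_
  rw [← Finset.card_erase_add_one (self_mem_locHyps_span_pair h.1)]
  exact Nat.succ_le_succ hcard

lemma IsLocallyHeavy.exists_prod_fiberHyps_dvd (h : IsLocallyHeavy A m c₀) {θ : Der K ℓ}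
    (hθ : IsLogDer A m θ) (hc : c ∈ A.hyps.erase c₀) :
    ∃ s, ∏ c' ∈ fiberHyps A c₀ c, linForm c' ^ m c' ∣ θ (linForm c) - linForm c₀ * s := by
  obtain ⟨hne, hcA⟩ := Finset.mem_erase.mp hc
  rcases lt_or_ge 1 (fiberHyps A c₀ c).card with hcard | hcard
  swap
  · have hsingle : fiberHyps A c₀ c = {c} := Finset.eq_singleton_iff_unique_mem.mpr
      ⟨self_mem_fiberHyps hc, fun c' hc' =>
        Finset.card_le_one.mp hcard c' hc' c (self_mem_fiberHyps hc)⟩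
    exact ⟨0, by simpa [hsingle] using hθ c hcA⟩
  choose! a ha using fun c' (hc' : c' ∈ fiberHyps A c₀ c) => exists_parallel_sub_smul h.1 hc'
  have ha_inj : Set.InjOn a (fiberHyps A c₀ c) := fun x hx y hy hxy =>
    A.eq_of_parallel (mem_hyps_of_mem_fiberHyps hx) (mem_hyps_of_mem_fiberHyps hy)
      ((ha x hx).symm.trans (hxy ▸ ha y hy))
  have hlin (t : K) : linForm c - t • linForm c₀ = linForm (c - t • c₀) := by
    rw [linForm_sub, linForm_smul]
  obtain ⟨g, hg⟩ := hθ c₀ h.1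
  obtain ⟨s, hs⟩ := exists_prod_dvd_sub_mul (p := θ (linForm c)) (g := g) ha_inj
    (h.sum_fiberHyps_le hc hcard) (A.isRelPrime hcA h.1 hne) fun c' hc' => by
      rw [← hg, ← θ.map_smul, ← map_sub, hlin]
      exact ((ha c' hc').associated_linForm.pow_pow.dvd).trans
        ((hθ c' (mem_hyps_of_mem_fiberHyps hc')).trans
          ((ha c' hc').associated_der_linForm θ).symm.dvd)
  simp only [hlin] at hs
  exact ⟨s, (Associated.prod _ _ _ fun c' hc' =>
    (ha c' hc').associated_linForm.pow_pow).symm.dvd.trans hs⟩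

end FiberHyps

section EulerZiegler

variable {n : ℕ} {A : Arrangement K (n + 1)} {m : (Fin (n + 1) → K) → ℕ} {c₀ : Fin (n + 1) → K}
  {e : LinearMap.ker (toFunc c₀) ≃ₗ[K] (Fin n → K)} {B : Arrangement K n} {mB : (Fin n → K) → ℕ}

/-- The condition in `IsEZRes` with the coordinates `e` on `ker c₀` fixed. -/
def IsEZResIn (e : LinearMap.ker (toFunc c₀) ≃ₗ[K] (Fin n → K)) (A : Arrangement K (n + 1))
    (m : (Fin (n + 1) → K) → ℕ) (B : Arrangement K n) (mB : (Fin n → K) → ℕ) : Prop :=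
  (∀ c ∈ A.hyps.erase c₀, ∃ b ∈ B.hyps, Parallel b (resCov c₀ e c) ∧ mB b = EZmult A m c₀ c) ∧
    ∀ b ∈ B.hyps, ∃ c ∈ A.hyps.erase c₀, Parallel b (resCov c₀ e c)

lemma IsEZResIn.exists_parallel (h : IsEZResIn e A m B mB) {b : Fin n → K} (hb : b ∈ B.hyps) :
    ∃ c ∈ A.hyps.erase c₀, Parallel b (resCov c₀ e c) ∧ mB b = EZmult A m c₀ c := by
  obtain ⟨c, hc, hbc⟩ := h.2 b hb
  obtain ⟨b', hb', hb'c, hmult⟩ := h.1 c hc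
  obtain rfl := B.eq_of_parallel hb hb' (hbc.trans hb'c.symm)
  exact ⟨c, hc, hbc, hmult⟩

lemma mem_fiberHyps_iff_parallel_resCov (e : LinearMap.ker (toFunc c₀) ≃ₗ[K] (Fin n → K))
    (hc₀ : c₀ ∈ A.hyps) {c c' : Fin (n + 1) → K} (hc' : c' ∈ A.hyps.erase c₀) :
    c' ∈ fiberHyps A c₀ c ↔ Parallel (resCov c₀ e c) (resCov c₀ e c') := by
  constructor
  · intro h
    obtain ⟨a, t, ht, rfl⟩ := exists_parallel_sub_smul hc₀ h
    refine ⟨t, ht, ?_⟩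
    simp only [← resCovHom_apply, map_smul, map_sub]
    rw [resCovHom_apply e c₀, resCov_self, smul_zero, sub_zero]
  · rintro ⟨t, -, ht⟩
    obtain ⟨s, hs⟩ := exists_eq_smul_add_smul e ht
    exact mem_fiberHyps.mpr ⟨hc', Submodule.mem_span_pair.mpr ⟨s, t, hs.symm⟩⟩

lemma associated_resHom_prod_fiberHyps (e : LinearMap.ker (toFunc c₀) ≃ₗ[K] (Fin n → K))
    (hc₀ : c₀ ∈ A.hyps) {b : Fin n → K} {c : Fin (n + 1) → K} (hbc : Parallel b (resCov c₀ e c)) :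
    Associated (linForm b ^ EZmult A m c₀ c)
      (resHom e (∏ c' ∈ fiberHyps A c₀ c, linForm c' ^ m c')) := by
  rw [EZmult_eq_sum_fiberHyps hc₀, ← Finset.prod_pow_eq_pow_sum, map_prod]
  refine Associated.prod _ _ _ fun c' hc' => ?_
  rw [map_pow, resHom_linForm]
  exact (hbc.trans ((mem_fiberHyps_iff_parallel_resCov e hc₀
    (mem_fiberHyps.mp hc').1).mp hc')).associated_linForm.pow_pow

lemma IsEZResIn.associated_definingPoly (hc₀ : c₀ ∈ A.hyps) (h : IsEZResIn e A m B mB) :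
    Associated (definingPoly B mB) (resHom e (∏ c ∈ A.hyps.erase c₀, linForm c ^ m c)) := by
  choose! β hβ hβ_par _ using h.1
  rw [← Finset.prod_fiberwise_of_maps_to hβ, map_prod, definingPoly]
  refine Associated.prod _ _ _ fun b hb => ?_
  obtain ⟨c, -, hbc, hmult⟩ := h.exists_parallel hb
  have hfiber : {c' ∈ A.hyps.erase c₀ | β c' = b} = fiberHyps A c₀ c := by
    ext c'
    rw [Finset.mem_filter, mem_fiberHyps, and_congr_right_iff]
    intro hc'
    rw [← (mem_fiberHyps.trans (and_iff_right hc')), mem_fiberHyps_iff_parallel_resCov e hc₀ hc']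
    exact ⟨fun hβb => hbc.symm.trans (hβb ▸ hβ_par c' hc'), fun hpar =>
      B.eq_of_parallel (hβ c' hc') hb ((hβ_par c' hc').trans (hpar.symm.trans hbc.symm))⟩
  rw [hfiber, hmult]
  exact associated_resHom_prod_fiberHyps e hc₀ hbc

theorem IsLocallyHeavy.isLogDer_resDer (h : IsLocallyHeavy A m c₀) (hm : 0 < m c₀)
    (hres : IsEZResIn e A m B mB) {θ : Der K (n + 1)} (hθ : IsLogDer A m θ) :
    IsLogDer B mB (resDer e θ) := by
  intro b hb
  obtain ⟨c, hc, hbc, hmult⟩ := hres.exists_parallel hb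
  obtain ⟨s, hs⟩ := h.exists_prod_fiberHyps_dvd hθ hc
  have hdvd := map_dvd (resHom e) hs
  rw [map_sub, map_mul, resHom_linForm_self, zero_mul, sub_zero,
    ← resDer_linForm_resCov e ((dvd_pow_self _ hm.ne').trans (hθ c₀ h.1))] at hdvd
  rw [hmult]
  exact (associated_resHom_prod_fiberHyps e h.1 hbc).dvd.trans
    (hdvd.trans (hbc.associated_der_linForm _).symm.dvd)

lemma resHom_det_of_der_linForm_extCov (e : LinearMap.ker (toFunc c₀) ≃ₗ[K] (Fin n → K))
    (θ : Fin n → Der K (n + 1)) :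
    resHom e (Matrix.of fun i j => θ i (linForm (extCov e (Pi.single j 1)))).det =
      (saitoMatrix fun i => resDer e (θ i)).det := by
  rw [AlgHom.map_det]
  congr 1
  ext1 i j
  exact (mkDerivation_X _ _ _).symm

lemma det_of_der_linForm_adaptedFrame (e : LinearMap.ker (toFunc c₀) ≃ₗ[K] (Fin n → K))
    {θ : Fin (n + 1) → Der K (n + 1)} {p : S K (n + 1)} {g : Fin (n + 1) → S K (n + 1)}
    (hg : ∀ i, θ i (linForm c₀) = p * g i) :
    (Matrix.of fun i j => θ i (linForm (adaptedFrame e j))).det =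
      p * ∑ i : Fin (n + 1), (-1) ^ (i : ℕ) * g i * (Matrix.of fun j l =>
        θ (i.succAbove j) (linForm (extCov e (Pi.single l 1)))).det := by
  rw [Matrix.det_succ_column_zero, Finset.mul_sum]
  refine Finset.sum_congr rfl fun i _ => ?_
  have hcol : θ i (linForm (adaptedFrame e 0)) = p * g i := hg i
  have hminor : (Matrix.of fun i j => θ i (linForm (adaptedFrame e j))).submatrix i.succAbove
      Fin.succ = Matrix.of fun j l => θ (i.succAbove j) (linForm (extCov e (Pi.single l 1))) := rfl
  rw [Matrix.of_apply, hcol, hminor]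
  ring

lemma IsEZResIn.isUnit_sum (hc₀ : c₀ ∈ A.hyps) (hres : IsEZResIn e A m B mB)
    {θ : Fin (n + 1) → Der K (n + 1)} (hθ : IsDerBasis A m θ) {g : Fin (n + 1) → S K (n + 1)}
    (hg : ∀ i, θ i (linForm c₀) = linForm c₀ ^ m c₀ * g i) {h : Fin (n + 1) → S K n}
    (hh : ∀ i : Fin (n + 1), (saitoMatrix fun j => resDer e (θ (i.succAbove j))).det =
      definingPoly B mB * h i) :
    IsUnit (∑ i : Fin (n + 1), (-1) ^ (i : ℕ) * resHom e (g i) * h i) := by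
  have hdet : Associated (definingPoly A m)
      (Matrix.of fun i j => θ i (linForm (adaptedFrame e j))).det := by
    rw [det_of_der_linForm]
    exact hθ.associated_det.trans (associated_mul_unit_right _ _
      (isUnit_C (det_adaptedFrame_ne_zero e (A.ne_zero c₀ hc₀))))
  rw [definingPoly_eq_mul_prod_erase hc₀, det_of_der_linForm_adaptedFrame e hg] at hdet
  have hsum := (hdet.of_mul_left (Associated.refl _)
    (pow_ne_zero _ (linForm_ne_zero (A.ne_zero c₀ hc₀)))).map (resHom e)
  simp only [map_sum, map_mul, map_pow, map_neg, map_one, resHom_det_of_der_linForm_extCov, hh,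
    mul_left_comm _ (definingPoly B mB), ← Finset.mul_sum] at hsum
  have hunit : Associated (definingPoly B mB * 1) (definingPoly B mB *
      ∑ i : Fin (n + 1), (-1) ^ (i : ℕ) * resHom e (g i) * h i) := by
    rw [mul_one]
    exact (hres.associated_definingPoly hc₀).trans (by simpa using hsum)
  exact (hunit.of_mul_left (Associated.refl _) definingPoly_ne_zero).symm.isUnit_iff.mpr isUnit_one

theorem IsLocallyHeavy.exists_isFreeWithExp_res (hlh : IsLocallyHeavy A m c₀) (hm : 0 < m c₀)
    (hres : IsEZRes A m c₀ B mB) {d : Fin (n + 1) → ℕ} (hd : IsFreeWithExp A m d) :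
    ∃ i, d i = m c₀ ∧ IsFreeWithExp B mB fun j => d (i.succAbove j) := by
  obtain ⟨hc₀, e, hres : IsEZResIn e A m B mB⟩ := hres
  obtain ⟨θ, hdeg, hθ⟩ := hd
  have hlog (i) : IsLogDer B mB (resDer e (θ i)) := hlh.isLogDer_resDer hm hres (hθ.1 i)
  choose g hg using fun i => hθ.1 i c₀ hc₀
  choose h hh using fun i : Fin (n + 1) =>
    definingPoly_dvd_det_saitoMatrix fun j => hlog (i.succAbove j)
  obtain ⟨i, hi⟩ : ∃ i : Fin (n + 1),
      constantCoeff ((-1) ^ (i : ℕ) * resHom e (g i) * h i) ≠ 0 := by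
    have hne := ((hres.isUnit_sum hc₀ hθ hg hh).map constantCoeff).ne_zero
    rw [map_sum] at hne
    obtain ⟨i, -, hi⟩ := Finset.exists_ne_zero_of_sum_ne_zero hne
    exact ⟨i, hi⟩
  rw [map_mul, map_mul, constantCoeff_resHom] at hi
  have hdeg_res (j) : IsHomogOfDeg (resDer e (θ (i.succAbove j))) (d (i.succAbove j)) :=
    isHomogOfDeg_resDer e (hdeg _)
  obtain ⟨hdi, -⟩ := eq_and_isUnit_of_isHomogeneous_mul (isHomogeneous_linForm_pow c₀ (m c₀))
    (pow_ne_zero _ (linForm_ne_zero (A.ne_zero c₀ hc₀))) (hg i ▸ hdeg i c₀)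
    (right_ne_zero_of_mul (left_ne_zero_of_mul hi))
  obtain ⟨-, hh_unit⟩ := eq_and_isUnit_of_isHomogeneous_mul isHomogeneous_definingPoly
    definingPoly_ne_zero (hh i ▸ isHomogeneous_det_saitoMatrix hdeg_res) (right_ne_zero_of_mul hi)
  exact ⟨i, hdi.symm, fun j => resDer e (θ (i.succAbove j)), hdeg_res,
    isDerBasis_of_associated_det (fun j => hlog _)
      (hh i ▸ associated_mul_unit_right _ _ hh_unit)⟩

end EulerZiegler

theorem stmt5 {n : ℕ} (A : Arrangement K (n+1)) (m : (Fin (n+1) → K) → ℕ)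
    (hm : ∀ c ∈ A.hyps, 0 < m c) (c₀ : Fin (n+1) → K) (hlh : IsLocallyHeavy A m c₀)
    (B : Arrangement K n) (mB : (Fin n → K) → ℕ) (hres : IsEZRes A m c₀ B mB)
    (hfree : IsFree A m) :
    IsFree B mB ∧ ∀ d : Fin (n+1) → ℕ, IsFreeWithExp A m d →
      ∃ d' : Fin n → ℕ, IsFreeWithExp B mB d' ∧
        Finset.univ.val.map d = m c₀ ::ₘ Finset.univ.val.map d' := by
  have key : ∀ d : Fin (n+1) → ℕ, IsFreeWithExp A m d →
      ∃ d' : Fin n → ℕ, IsFreeWithExp B mB d' ∧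
        Finset.univ.val.map d = m c₀ ::ₘ Finset.univ.val.map d' := by
    intro d hd
    obtain ⟨i, hi, hfi⟩ := hlh.exists_isFreeWithExp_res (hm c₀ hlh.1) hres hd
    refine ⟨_, hfi, ?_⟩
    rw [Fin.univ_succAbove n i, Finset.cons_val, Multiset.map_cons, hi, Finset.map_val,
      Multiset.map_map]
    rfl
  obtain ⟨d, hd⟩ := hfree
  obtain ⟨d', hd', -⟩ := key d hd
  exact ⟨⟨d', hd'⟩, key⟩

end ArrPaper
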